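/- arXiv:0903.5018 — 4 statements merged into one kernel-verified Lean document; each statement's English description precedes it below -/
import Mathlib

section
/- Let k be an algebraically closed field of characteristic zero. Let r ≥ 0, s ≥ 1, p ≥ 0 be integers, and let d_1 ≤ … ≤ d_s be integers with d_i ≥ 2 for all i, with d_{s-1} < d_s when s ≥ 2, and with t := d_s ≥ 3. Assume (r+2)·p + r + 1 ≥ (Σ_{i=1}^s C(d_i + r + 1, r + 1)) − 1. Then there exist homogeneous elements a_{i,j} ∈ R_{d_i − 1} (for 1 ≤ i ≤ s, 1 ≤ j ≤ p) and homogeneous elements b_i ∈ R_{d_i − 1} satisfying x̄_0 · b_i = 0 (for 1 ≤ i ≤ s), such that the k-linear map from (R_1)^{p+1} to the direct sum ⊕_{i=1}^s R_{d_i} sending (v_1, …, v_p, w) to the tuple whose i-th component is Σ_{j=1}^p a_{i,j}·v_j + b_i·w, is surjective. -/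
open MvPolynomial

/-- The graded ring `R = k[x₀, …, x_{r+1}]/(x₀ᵗ)` of a `t`-fat `r`-plane. -/
abbrev fatRing (k : Type*) [Field k] (r t : ℕ) : Type _ :=
  MvPolynomial (Fin (r + 2)) k ⧸
    Ideal.span {(X 0 : MvPolynomial (Fin (r + 2)) k) ^ t}

/-- The degree-`e` homogeneous component of `R = k[x₀, …, x_{r+1}]/(x₀ᵗ)`, namely the
image of the degree-`e` homogeneous forms under the quotient map. -/
noncomputable def fatRingComp (k : Type*) [Field k] (r t e : ℕ) :
    Submodule k (fatRing k r t) :=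
  (homogeneousSubmodule (Fin (r + 2)) k e).map
    (Ideal.Quotient.mkₐ k
      (Ideal.span {(X 0 : MvPolynomial (Fin (r + 2)) k) ^ t})).toLinearMap

/-!
Put `S = k[x₀, …, x_{n-1}]` with `n = r + 2`, `eᵢ = dᵢ - 1`, and let `b` be the tuple with the
single nonzero entry `x₀ ^ (t - 1)`, which `x₀` kills modulo `x₀ ^ t`. It is enough to find tuples
`aⱼ` of forms in `S` such that `(v, w) ↦ ∑ aⱼ vⱼ + b w` maps onto `V = ∏ S_{eᵢ + 1}`.

Over a finite field with `q > 2 ^ n` elements such `aⱼ` exist by counting. If all choices failed,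
each would be killed by at least `q` functionals on `V`, all of them vanishing on `b S₁`. If the
space `K` of linear forms `l` with `φ ((∏ S_{eᵢ}) l) = 0` has codimension `h`, then `φ` kills a
fraction `q ^ (-h p)` of the choices. Sort the `φ` into `2 ^ n` cells, according to a coordinate
subspace complementary to `K`. A cell contains at most `q ^ (h (n - h))` subspaces `K`, each
admitting at most `q ^ ∑ C(h + eᵢ, eᵢ + 1)` functionals, and vanishing on `b S₁` saves a further
factor `q ^ h`: either `x₀ ∉ K`, which gives `h` more conditions on `φ`, or `x₀ ∈ K`, which leaves
fewer subspaces `K`. The numerical hypothesis, passed down from `n` to `h ≤ n`, bounds the cell by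
`q ^ (h p)`, so all functionals together kill at most `2 ^ n < q` times the number of choices.

Surjectivity is the nonvanishing of a polynomial with integer coefficients, so it passes from a
finite field of characteristic `char k` (or of large characteristic, if `char k = 0`) to `k`.
-/

/-! ### Binomial estimates -/

theorem mul_multichoose_succ_left (h e : ℕ) :
    h * Nat.multichoose (h + 1) e = (e + 1) * Nat.multichoose h (e + 1) := by
  cases h with
  | zero => simp
  | succ h =>
    have key := Nat.choose_succ_right_eq (h + 1 + e) e
    rw [Nat.add_sub_cancel, mul_comm, mul_comm (Nat.choose _ _)] at key
    rw [Nat.multichoose_eq, Nat.multichoose_eq, show h + 1 + 1 + e - 1 = h + 1 + e by omega,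
      show h + 1 + (e + 1) - 1 = h + 1 + e by omega, key]

theorem mul_multichoose_succ_succ (h e : ℕ) :
    h * Nat.multichoose (h + 1) (e + 1) = (h + e + 1) * Nat.multichoose h (e + 1) := by
  rw [Nat.multichoose_succ_succ, mul_add, mul_multichoose_succ_left]
  ring

theorem mul_succ_le_mul_multichoose (h : ℕ) {e : ℕ} (he : 2 ≤ e) :
    h * (h + 1) ≤ e * Nat.multichoose h (e + 1) := by
  obtain rfl | hh := Nat.eq_zero_or_pos h
  · simp
  have hmono : Nat.multichoose (h + 1) 2 ≤ Nat.multichoose (h + 1) e := by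
    have hsymm (m : ℕ) : Nat.multichoose (h + 1) m = (h + m).choose h := by
      rw [Nat.multichoose_eq, show h + 1 + m - 1 = h + m by omega, Nat.choose_symm_add]
    rw [hsymm, hsymm]
    exact Nat.choose_le_choose h (by omega)
  have htwo : 2 * Nat.multichoose (h + 1) 2 = (h + 1) * (h + 2) := by
    rw [← mul_multichoose_succ_left (h + 1) 1, Nat.multichoose_one_right]
  refine Nat.le_of_mul_le_mul_left (c := 2 * (e + 1)) ?_ (by positivity)
  calc 2 * (e + 1) * (h * (h + 1)) ≤ e * (h * ((h + 1) * (h + 2))) := by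
        have hfac : 2 * (e + 1) ≤ e * (h + 2) := by nlinarith
        linarith [Nat.mul_le_mul_right (h * (h + 1)) hfac]
    _ ≤ e * (h * (2 * Nat.multichoose (h + 1) e)) := by rw [← htwo]; gcongr
    _ = 2 * (e + 1) * (e * Nat.multichoose h (e + 1)) := by
        linear_combination 2 * e * mul_multichoose_succ_left h e

theorem succ_mul_sum_multichoose_add_le {ι : Type*} [Fintype ι] (e : ι → ℕ) {i₀ : ι}
    (hi₀ : 2 ≤ e i₀) (h : ℕ) :
    (h + 1) * ∑ i, Nat.multichoose h (e i + 1) + h * (h + 1) ≤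
      h * ∑ i, Nat.multichoose (h + 1) (e i + 1) := by
  have hrec : h * ∑ i, Nat.multichoose (h + 1) (e i + 1) =
      (h + 1) * ∑ i, Nat.multichoose h (e i + 1) + ∑ i, e i * Nat.multichoose h (e i + 1) := by
    simp_rw [Finset.mul_sum, ← Finset.sum_add_distrib, mul_multichoose_succ_succ]
    exact Finset.sum_congr rfl fun i _ => by ring
  rw [hrec]
  gcongr
  exact (mul_succ_le_mul_multichoose h hi₀).trans <|
    Finset.single_le_sum (f := fun i => e i * Nat.multichoose h (e i + 1))
      (fun i _ => Nat.zero_le _) (Finset.mem_univ i₀)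

-- Dividing the bound at `h + 1` by `(h + 1) / h` gives the bound at `h`.
theorem sum_multichoose_add_mul_le {ι : Type*} [Fintype ι] (e : ι → ℕ) {i₀ : ι}
    (hi₀ : 2 ≤ e i₀) {n p : ℕ} (hn : ∑ i, Nat.multichoose n (e i + 1) ≤ n * (p + 1))
    {h : ℕ} (hh : h ≤ n) :
    ∑ i, Nat.multichoose h (e i + 1) + h * n ≤ h * h + h * (p + 1) := by
  induction hh using Nat.decreasingInduction with
  | self => linarith
  | of_succ h _ ih =>
    refine Nat.le_of_mul_le_mul_left (c := h + 1) ?_ (by omega)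
    nlinarith [succ_mul_sum_multichoose_add_le e hi₀ h]

/-! ### Powers of subspaces and cells of subspaces -/

theorem sup_pow_succ_le {R A : Type*} [CommSemiring R] [CommSemiring A] [Algebra R A]
    (K J : Submodule R A) (d : ℕ) : (K ⊔ J) ^ (d + 1) ≤ (K ⊔ J) ^ d * K ⊔ J ^ (d + 1) := by
  induction d with
  | zero => simp
  | succ d ih =>
    calc (K ⊔ J) ^ (d + 1 + 1)
        = (K ⊔ J) ^ (d + 1) * K ⊔ (K ⊔ J) ^ (d + 1) * J := by rw [pow_succ, Submodule.mul_sup]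
      _ ≤ (K ⊔ J) ^ (d + 1) * K ⊔ ((K ⊔ J) ^ d * K ⊔ J ^ (d + 1)) * J := by gcongr
      _ = (K ⊔ J) ^ (d + 1) * K ⊔ ((K ⊔ J) ^ d * J * K ⊔ J ^ (d + 1 + 1)) := by
        rw [Submodule.sup_mul, mul_right_comm, ← pow_succ]
      _ ≤ (K ⊔ J) ^ (d + 1) * K ⊔ J ^ (d + 1 + 1) := by
        refine sup_le le_sup_left (sup_le_sup_right ?_ _)
        rw [pow_succ]
        gcongr
        exact le_sup_right

theorem finrank_pow_le_multichoose {F A : Type*} [Field F] [CommRing A] [Algebra F A]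
    (J : Submodule F A) [FiniteDimensional F J] (d : ℕ) :
    Module.finrank F ↥(J ^ d) ≤ Nat.multichoose (Module.finrank F J) d := by
  let x := Module.finBasis F J
  let y (m : Sym (Fin (Module.finrank F J)) d) : A := (m.1.map fun i => (x i : A)).prod
  have hspan : J = Submodule.span F (Set.range fun i => (x i : A)) := by
    have hx := congrArg (Submodule.map J.subtype) x.span_eq
    rw [Submodule.map_span, Submodule.map_top, Submodule.range_subtype, ← Set.range_comp] at hx
    exact hx.symm
  have hle : J ^ d ≤ Submodule.span F (Set.range y) := by
    conv_lhs => rw [hspan, Submodule.span_pow]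
    refine Submodule.span_mono fun a ha => ?_
    obtain ⟨f, rfl⟩ := Set.mem_pow.1 ha
    choose g hg using fun j => (f j).2
    refine ⟨⟨Multiset.ofList (List.ofFn g), by simp⟩, ?_⟩
    simp [y, List.map_ofFn, Function.comp_def, hg]
  have : FiniteDimensional F (Submodule.span F (Set.range y)) :=
    .span_of_finite F (Set.finite_range y)
  calc Module.finrank F ↥(J ^ d)
      ≤ Module.finrank F (Submodule.span F (Set.range y)) := Submodule.finrank_mono hle
    _ ≤ Fintype.card (Sym (Fin (Module.finrank F J)) d) := finrank_range_le_card y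
    _ = Nat.multichoose (Module.finrank F J) d := Sym.card_sym_fin_eq_multichoose _ _

theorem finrank_span_image_eq_ncard {F E σ : Type*} [Field F] [AddCommGroup E] [Module F E]
    {x : σ → E} (hx : LinearIndependent F x) (I : Set σ) :
    Module.finrank F (Submodule.span F (x '' I)) = I.ncard := by
  rw [Set.image_eq_range, ← Nat.card_coe_set_eq]
  exact Module.finrank_eq_nat_card_basis (.span (hx.comp _ Subtype.val_injective))

/-- The subspaces complementary to the coordinate subspace `⟨xᵢ : i ∈ I⟩` of a basis `x` which,
unless `o ∈ I`, contain `x o`. As `I` varies, these cells cover all subspaces; recording `x o`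
is what makes the count of functionals annihilating a multiple of `x o` sharp. -/
def complCell {F E σ : Type*} [Field F] [AddCommGroup E] [Module F E] (x : Module.Basis σ F E)
    (o : σ) (I : Set σ) : Set (Submodule F E) :=
  {K | IsCompl (Submodule.span F (x '' I)) K ∧ (x o ∈ K ∨ o ∈ I)}

section complCell

variable {F E σ : Type*} [Field F] [AddCommGroup E] [Module F E] (x : Module.Basis σ F E) (o : σ)

theorem exists_isCompl_span_image {K : Submodule F E} {S : Set σ}
    (hS : LinearIndepOn F (K.mkQ ∘ x) S) :
    ∃ I, S ⊆ I ∧ IsCompl (Submodule.span F (x '' I)) K := by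
  obtain ⟨I, -, hSI, hspan, hI⟩ := exists_linearIndepOn_extension hS (Set.subset_univ S)
  refine ⟨I, hSI, ?_, ?_⟩
  · have hdisj := Submodule.range_ker_disjoint (f := K.mkQ) hI
    rwa [K.ker_mkQ, ← Set.image_eq_range] at hdisj
  · rw [codisjoint_iff, eq_top_iff, ← x.span_eq, Submodule.span_le]
    rintro _ ⟨l, rfl⟩
    have hl := hspan (Set.mem_image_of_mem _ (Set.mem_univ l))
    rw [Set.image_comp, ← Submodule.map_span] at hl
    rw [← K.ker_mkQ, SetLike.mem_coe, ← Submodule.comap_map_eq]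
    exact hl

theorem exists_mem_complCell (K : Submodule F E) : ∃ I, K ∈ complCell x o I := by
  by_cases ho : x o ∈ K
  · obtain ⟨I, -, hI⟩ := exists_isCompl_span_image x (linearIndepOn_empty F (K.mkQ ∘ x))
    exact ⟨I, hI, Or.inl ho⟩
  · have hne : (K.mkQ ∘ x) o ≠ 0 := by simpa using ho
    obtain ⟨I, hoI, hI⟩ := exists_isCompl_span_image x (LinearIndepOn.singleton (R := F) hne)
    exact ⟨I, hI, Or.inr (hoI rfl)⟩

theorem card_complCell_mul_le [Finite F] [Finite σ] (I : Set σ) :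
    Nat.card (complCell x o I) * Nat.card F ^ (I.ncard * (insert o I).ncard) ≤
      Nat.card F ^ (I.ncard * Nat.card σ) := by
  let J := Submodule.span F (x '' I)
  have : Module.Finite F E := .of_basis x
  have : Finite J := Module.finite_of_finite F
  have hJ : Nat.card J = Nat.card F ^ I.ncard := by
    rw [Module.natCard_eq_pow_finrank (K := F), finrank_span_image_eq_ncard x.linearIndependent]
  -- A member of the cell is the kernel of the projection onto `J` along it, which is prescribed
  -- on the basis vectors indexed by `insert o I`.
  let proj (K : complCell x o I) (l : ↥(insert o I)ᶜ) : J := J.projectionOnto K.1 K.2.1 (x l)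
  have hproj : Function.Injective proj := by
    rintro ⟨K, hK, hKo⟩ ⟨K', hK', hKo'⟩ heq
    have hext : J.projectionOnto K hK = J.projectionOnto K' hK' := by
      refine x.ext fun l => ?_
      by_cases hlI : l ∈ I
      · have hl : x l ∈ J := Submodule.subset_span (Set.mem_image_of_mem x hlI)
        simp only [Submodule.projectionOnto_apply_of_mem_left _ hl]
      · obtain rfl | hlo := eq_or_ne l o
        · rw [(Submodule.projectionOnto_apply_eq_zero_iff hK).2 (hKo.resolve_right hlI),
            (Submodule.projectionOnto_apply_eq_zero_iff hK').2 (hKo'.resolve_right hlI)]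
        · exact congrFun heq ⟨l, by simp [hlI, hlo]⟩
    have hker := congrArg LinearMap.ker hext
    rw [Submodule.ker_projectionOnto, Submodule.ker_projectionOnto] at hker
    exact Subtype.ext hker
  calc Nat.card (complCell x o I) * Nat.card F ^ (I.ncard * (insert o I).ncard)
      ≤ Nat.card (↥(insert o I)ᶜ → J) * Nat.card F ^ (I.ncard * (insert o I).ncard) :=
        Nat.mul_le_mul_right _ (Nat.card_le_card_of_injective proj hproj)
    _ = Nat.card F ^ (I.ncard * Nat.card σ) := by
        rw [Nat.card_fun, hJ, ← pow_mul, ← pow_add, ← mul_add, Nat.card_coe_set_eq, add_comm,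
          Set.ncard_add_ncard_compl]

end complCell

/-! ### Surjectivity by counting functionals -/

section Counting

variable {F U L V : Type*} [Field F] [AddCommGroup U] [Module F U] [AddCommGroup L] [Module F L]
  [AddCommGroup V] [Module F V]

theorem mem_dualAnnihilator_range_iff (μ : U →ₗ[F] L →ₗ[F] V) (φ : Module.Dual F V) (u : U) :
    φ ∈ (LinearMap.range (μ u)).dualAnnihilator ↔ u ∈ LinearMap.ker (μ.compr₂ φ) := by
  simp [Submodule.mem_dualAnnihilator, LinearMap.ext_iff]

theorem card_le_card_dualAnnihilator [Finite F] [FiniteDimensional F V] {N : Submodule F V}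
    (hN : N ≠ ⊤) : Nat.card F ≤ Nat.card N.dualAnnihilator := by
  have hpos : Module.finrank F N.dualAnnihilator ≠ 0 := by
    have hadd := Subspace.finrank_add_finrank_dualAnnihilator_eq N
    have hlt := Submodule.finrank_lt hN
    omega
  rw [Module.natCard_eq_pow_finrank (K := F) (V := N.dualAnnihilator)]
  exact Nat.le_self_pow hpos _

theorem card_dual_mul_card_ker_pow_le [Finite F] [FiniteDimensional F U]
    (μ : U →ₗ[F] L →ₗ[F] V) {p h : ℕ} {Φ : Set (Module.Dual F V)} [Finite Φ]
    (hrank : ∀ φ ∈ Φ, Module.finrank F (LinearMap.range (μ.compr₂ φ)) = h)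
    (hcard : Nat.card Φ ≤ Nat.card F ^ (h * p)) :
    Nat.card (Σ φ : Φ, Fin p → LinearMap.ker (μ.compr₂ φ.1)) ≤ Nat.card (Fin p → U) := by
  have := Fintype.ofFinite Φ
  have : Finite U := Module.finite_of_finite F
  have hker (φ : Φ) : Nat.card (Fin p → LinearMap.ker (μ.compr₂ φ.1)) =
      Nat.card F ^ ((Module.finrank F U - h) * p) := by
    rw [Nat.card_fun, Module.natCard_eq_pow_finrank (K := F), ← pow_mul, Nat.card_fin,
      ← (μ.compr₂ φ.1).finrank_range_add_finrank_ker, hrank φ φ.2, Nat.add_sub_cancel_left]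
  rw [Nat.card_sigma]
  simp only [hker, Finset.sum_const, Finset.card_univ, smul_eq_mul, Fintype.card_eq_nat_card]
  obtain hΦ | ⟨⟨φ, hφ⟩⟩ := isEmpty_or_nonempty Φ
  · simp
  have hle : h ≤ Module.finrank F U := by
    rw [← hrank φ hφ]
    exact LinearMap.finrank_range_le _
  calc Nat.card Φ * Nat.card F ^ ((Module.finrank F U - h) * p)
      ≤ Nat.card F ^ (h * p) * Nat.card F ^ ((Module.finrank F U - h) * p) := by gcongr
    _ = Nat.card (Fin p → U) := by
      rw [Nat.card_fun, Module.natCard_eq_pow_finrank (K := F) (V := U), ← pow_mul, Nat.card_fin,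
        ← pow_add, ← add_mul, Nat.add_sub_cancel' hle]

theorem exists_iSup_range_sup_eq_top [Finite F] [FiniteDimensional F U] [FiniteDimensional F V]
    (μ : U →ₗ[F] L →ₗ[F] V) (W : Submodule F V) (p : ℕ) {κ : Type*} [Finite κ]
    (Φ : κ → Set (Module.Dual F V)) (h : κ → ℕ) (hcover : ∀ φ ∈ W.dualAnnihilator, ∃ i, φ ∈ Φ i)
    (hrank : ∀ i, ∀ φ ∈ Φ i, Module.finrank F (LinearMap.range (μ.compr₂ φ)) = h i)
    (hcard : ∀ i, Nat.card (Φ i) ≤ Nat.card F ^ (h i * p)) (hκ : Nat.card κ < Nat.card F) :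
    ∃ a : Fin p → U, (⨆ j, LinearMap.range (μ (a j))) ⊔ W = ⊤ := by
  by_contra! hne
  have : Finite U := Module.finite_of_finite F
  have : Finite (Module.Dual F V) := Module.finite_of_finite F
  have := Fintype.ofFinite κ
  have := Fintype.ofFinite (Fin p → U)
  let N (a : Fin p → U) : Submodule F V := (⨆ j, LinearMap.range (μ (a j))) ⊔ W
  have hmem {a : Fin p → U} {φ : Module.Dual F V} (hφ : φ ∈ (N a).dualAnnihilator) :
      (∃ i, φ ∈ Φ i) ∧ ∀ j, a j ∈ LinearMap.ker (μ.compr₂ φ) := by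
    rw [Submodule.dualAnnihilator_sup_eq, Submodule.dualAnnihilator_iSup_eq] at hφ
    exact ⟨hcover φ hφ.2, fun j =>
      (mem_dualAnnihilator_range_iff μ φ _).1 ((Submodule.mem_iInf _).1 hφ.1 j)⟩
  let toCell (x : Σ a, (N a).dualAnnihilator) :
      Σ i, Σ φ : Φ i, Fin p → LinearMap.ker (μ.compr₂ φ.1) :=
    ⟨(hmem x.2.2).1.choose, ⟨x.2.1, (hmem x.2.2).1.choose_spec⟩,
      fun j => ⟨x.1 j, (hmem x.2.2).2 j⟩⟩
  have hinj : Function.Injective toCell :=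
    Function.Injective.of_comp (f := fun y => (y.2.1.1, fun j => (y.2.2 j : U))) <| by
      rintro ⟨a, φ⟩ ⟨b, ψ⟩ hab
      obtain ⟨hφ, rfl⟩ : φ.1 = ψ.1 ∧ a = b := Prod.ext_iff.1 hab
      exact congrArg _ (Subtype.ext hφ)
  refine hκ.not_ge (Nat.le_of_mul_le_mul_right (c := Nat.card (Fin p → U)) ?_ Nat.card_pos)
  calc Nat.card F * Nat.card (Fin p → U)
      ≤ ∑ a, Nat.card (N a).dualAnnihilator := by
        rw [mul_comm, ← Fintype.card_eq_nat_card, ← smul_eq_mul]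
        exact Finset.card_nsmul_le_sum _ _ _ fun a _ => card_le_card_dualAnnihilator (hne a)
    _ = Nat.card (Σ a, (N a).dualAnnihilator) := Nat.card_sigma.symm
    _ ≤ Nat.card (Σ i, Σ φ : Φ i, Fin p → LinearMap.ker (μ.compr₂ φ.1)) :=
        Nat.card_le_card_of_injective toCell hinj
    _ = ∑ i, Nat.card (Σ φ : Φ i, Fin p → LinearMap.ker (μ.compr₂ φ.1)) := Nat.card_sigma
    _ ≤ ∑ _i : κ, Nat.card (Fin p → U) :=
        Finset.sum_le_sum fun i _ => card_dual_mul_card_ker_pow_le μ (hrank i) (hcard i)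
    _ = Nat.card κ * Nat.card (Fin p → U) := by simp

end Counting

/-! ### Functionals on products of powers of a subspace -/

section MulPow

variable {F A ι : Type*} [Field F] [CommRing A] [Algebra F A]

theorem finite_pow {R B : Type*} [CommSemiring R] [Semiring B] [Algebra R B] (J : Submodule R B)
    [Module.Finite R J] (d : ℕ) : Module.Finite R ↥(J ^ d) :=
  .of_fg ((Module.Finite.iff_fg.1 ‹_›).pow d)

/-- The componentwise multiplication `(uᵢ)ᵢ, l ↦ (uᵢ * l)ᵢ` from `(∏ L ^ eᵢ) × L` to
`∏ L ^ (eᵢ + 1)`. For the space `L` of linear forms of a polynomial ring these are the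
multiplication maps whose joint surjectivity is studied here. -/
def mulPow (L : Submodule F A) (e : ι → ℕ) :
    (∀ i, ↥(L ^ e i)) →ₗ[F] L →ₗ[F] ∀ i, ↥(L ^ (e i + 1)) :=
  LinearMap.mk₂ F (fun u l i => ⟨u i * l, pow_succ L (e i) ▸ Submodule.mul_mem_mul (u i).2 l.2⟩)
    (fun _ _ _ => by ext; exact add_mul _ _ _)
    (fun _ _ _ => by ext; exact smul_mul_assoc _ _ _)
    (fun _ _ _ => by ext; exact mul_add _ _ _)
    (fun _ _ _ => by ext; exact mul_smul_comm _ _ _)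

/-- The subspace `∏ J ^ (eᵢ + 1)` of `∏ L ^ (eᵢ + 1)`, for a subspace `J` of `L`. A functional
vanishing on `(∏ L ^ eᵢ) * K`, for a complement `K` of `J`, is determined by its restriction to
it. -/
def piPow {L : Submodule F A} (e : ι → ℕ) (J : Submodule F L) :
    Submodule F (∀ i, ↥(L ^ (e i + 1))) :=
  Submodule.pi Set.univ fun i =>
    ((J.map L.subtype) ^ (e i + 1)).comap (L ^ (e i + 1)).subtype

/-- The tuple of `∏ L ^ eᵢ` whose only nonzero entry is `y ^ e i₀`, at `i₀`; for `y = x₀` it is the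
tuple `b` of the theorem. -/
def singlePow [DecidableEq ι] {L : Submodule F A} (e : ι → ℕ) (i₀ : ι) (y : L) :
    ∀ i, ↥(L ^ e i) :=
  Pi.single i₀ ⟨y ^ e i₀, Submodule.pow_mem_pow L y.2 _⟩

variable {L : Submodule F A} (e : ι → ℕ)

@[simp]
theorem coe_mulPow_apply (u : ∀ i, ↥(L ^ e i)) (l : L) (i : ι) :
    (mulPow L e u l i : A) = u i * l :=
  rfl

theorem mulPow_single [DecidableEq ι] (i : ι) (a : ↥(L ^ e i)) (l : L) :
    mulPow L e (Pi.single i a) l =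
      Pi.single i ⟨a * l, pow_succ L (e i) ▸ Submodule.mul_mem_mul a.2 l.2⟩ := by
  ext i'
  obtain rfl | hi := eq_or_ne i' i
  · simp
  · simp [hi]

theorem coe_mulPow_singlePow_apply [DecidableEq ι] (i₀ : ι) (y l : L) (i : ι) :
    (mulPow L e (singlePow e i₀ y) l i : A) = if i = i₀ then (y : A) ^ e i₀ * l else 0 := by
  obtain rfl | hi := eq_or_ne i i₀
  · simp [singlePow]
  · simp [singlePow, hi]

theorem mulPow_singlePow_injective [DecidableEq ι] [IsDomain A] (i₀ : ι) {y : L} (hy : y ≠ 0) :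
    Function.Injective (mulPow L e (singlePow e i₀ y)) := by
  refine (injective_iff_map_eq_zero _).2 fun l hl => ?_
  have hmul : (y : A) ^ e i₀ * l = 0 := by
    have hi₀ : (mulPow L e (singlePow e i₀ y) l i₀ : A) = 0 := by rw [hl]; rfl
    rwa [coe_mulPow_singlePow_apply, if_pos rfl] at hi₀
  exact Subtype.ext ((mul_eq_zero_iff_left (pow_ne_zero _ (by simpa using hy))).1 hmul)

theorem mulPow_singlePow_mem_piPow [DecidableEq ι] (i₀ : ι) {J : Submodule F L} {y l : L}
    (hy : y ∈ J) (hl : l ∈ J) : mulPow L e (singlePow e i₀ y) l ∈ piPow e J := by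
  intro i _
  change (mulPow L e (singlePow e i₀ y) l i : A) ∈ (J.map L.subtype) ^ (e i + 1)
  rw [coe_mulPow_singlePow_apply]
  split_ifs with hi
  · subst hi
    rw [pow_succ]
    exact Submodule.mul_mem_mul (Submodule.pow_mem_pow _ (Submodule.mem_map_of_mem hy) _)
      (Submodule.mem_map_of_mem hl)
  · exact Submodule.zero_mem _

theorem finrank_piPow_le [Fintype ι] (J : Submodule F L) [FiniteDimensional F J] :
    Module.finrank F (piPow e J) ≤
      ∑ i, Nat.multichoose (Module.finrank F J) (e i + 1) := by
  let f (i : ι) : Submodule F A := J.map L.subtype ^ (e i + 1)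
  let g : piPow e J →ₗ[F] ∀ i, f i :=
    LinearMap.pi fun i => ((L ^ (e i + 1)).subtype ∘ₗ
      LinearMap.proj (φ := fun i => ↥(L ^ (e i + 1))) i ∘ₗ (piPow e J).subtype).codRestrict (f i)
        fun v => v.2 i (Set.mem_univ i)
  have hg : Function.Injective g := fun v w hvw => by
    ext i
    exact congrArg (fun z : ∀ i, f i => (z i : A)) hvw
  have (i : ι) : Module.Finite F (f i) := finite_pow _ _
  calc Module.finrank F (piPow e J) ≤ Module.finrank F (∀ i, f i) :=
        LinearMap.finrank_le_finrank_of_injective hg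
    _ = ∑ i, Module.finrank F (f i) := Module.finrank_pi_fintype F
    _ ≤ ∑ i, Nat.multichoose (Module.finrank F (J.map L.subtype)) (e i + 1) :=
        Finset.sum_le_sum fun i _ => finrank_pow_le_multichoose _ _
    _ = _ := by rw [LinearEquiv.finrank_eq (J.equivMapOfInjective _ L.subtype_injective).symm]

theorem pow_mul_map_le_map_comap_single [DecidableEq ι] (K : Submodule F L) (i : ι) :
    L ^ e i * K.map L.subtype ≤
      ((Submodule.map₂ (mulPow L e) ⊤ K).comap (LinearMap.single F _ i)).map
        (L ^ (e i + 1)).subtype := by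
  rw [Submodule.mul_le]
  rintro a ha _ ⟨l, hl, rfl⟩
  refine ⟨⟨a * l, pow_succ L (e i) ▸ Submodule.mul_mem_mul ha l.2⟩, ?_, rfl⟩
  rw [SetLike.mem_coe, Submodule.mem_comap, LinearMap.single_apply, ← mulPow_single e i ⟨a, ha⟩]
  exact Submodule.apply_mem_map₂ _ Submodule.mem_top hl

theorem map₂_mulPow_sup_piPow_eq_top [Finite ι] {J K : Submodule F L} (h : Codisjoint J K) :
    Submodule.map₂ (mulPow L e) ⊤ K ⊔ piPow e J = ⊤ := by
  classical
  have := Fintype.ofFinite ι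
  have hL : L = K.map L.subtype ⊔ J.map L.subtype := by
    rw [← Submodule.map_sup, sup_comm, h.eq_top, Submodule.map_top, Submodule.range_subtype]
  have hpow (i : ι) : L ^ (e i + 1) ≤
      L ^ e i * K.map L.subtype ⊔ J.map L.subtype ^ (e i + 1) := by
    have hle := sup_pow_succ_le (K.map L.subtype) (J.map L.subtype) (e i)
    rwa [← hL] at hle
  refine top_unique fun v _ => ?_
  choose a ha b hb hab using fun i => Submodule.mem_sup.1 (hpow i (v i).2)
  choose a' ha' haa' using fun i => pow_mul_map_le_map_comap_single e K i (ha i)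
  refine Submodule.mem_sup.2 ⟨a', ?_, v - a', fun i _ => ?_, add_sub_cancel _ _⟩
  · rw [← Finset.univ_sum_single a']
    exact Submodule.sum_mem _ fun i _ => ha' i
  · have hb' : ((v - a') i : A) = b i :=
      sub_eq_of_eq_add' ((hab i).symm.trans (congrArg (· + b i) (haa' i).symm))
    rw [SetLike.mem_coe, Submodule.mem_comap, Submodule.subtype_apply, hb']
    exact hb i

theorem finrank_dualAnnihilator_add_finrank_le [Fintype ι] [FiniteDimensional F L]
    {J K : Submodule F L} (h : Codisjoint J K) {N : Submodule F (∀ i, ↥(L ^ (e i + 1)))}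
    (hN : Submodule.map₂ (mulPow L e) ⊤ K ≤ N) :
    Module.finrank F N.dualAnnihilator + Module.finrank F ↥(piPow e J ⊓ N) ≤
      ∑ i, Nat.multichoose (Module.finrank F J) (e i + 1) := by
  have (i : ι) : FiniteDimensional F ↥(L ^ (e i + 1)) := finite_pow _ _
  have htop : N ⊔ piPow e J = ⊤ := top_unique <|
    (map₂_mulPow_sup_piPow_eq_top e h).symm.le.trans (sup_le_sup_right hN _)
  have hsup := Submodule.finrank_sup_add_finrank_inf_eq N (piPow e J)
  have hann := Subspace.finrank_add_finrank_dualAnnihilator_eq N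
  rw [htop, finrank_top, inf_comm] at hsup
  have := finrank_piPow_le e J
  omega

end MulPow

theorem mem_dualAnnihilator_map₂_ker_flip {F U L V : Type*} [Field F] [AddCommGroup U] [Module F U]
    [AddCommGroup L] [Module F L] [AddCommGroup V] [Module F V] (μ : U →ₗ[F] L →ₗ[F] V)
    (φ : Module.Dual F V) :
    φ ∈ (Submodule.map₂ μ ⊤ (LinearMap.ker (μ.compr₂ φ).flip)).dualAnnihilator := by
  have hle : Submodule.map₂ μ ⊤ (LinearMap.ker (μ.compr₂ φ).flip) ≤ LinearMap.ker φ :=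
    Submodule.map₂_le.2 fun u _ l hl => LinearMap.congr_fun hl u
  exact (Submodule.mem_dualAnnihilator φ).2 fun v hv => hle hv

section DualCell

variable {F A ι σ : Type*} [Field F] [CommRing A] [Algebra F A] [DecidableEq ι]
  {L : Submodule F A} (e : ι → ℕ) (i₀ : ι) (x : Module.Basis σ F L) (o : σ)

/-- The subspace `(∏ L ^ eᵢ) * K + y ^ (e i₀) * L` of `∏ L ^ (eᵢ + 1)`, the last term sitting in
the factor `i₀`. Its annihilators, as `K` varies over a cell, contain the functionals of
`dualCell`. -/
def mulSpan (y : L) (K : Submodule F L) : Submodule F (∀ i, ↥(L ^ (e i + 1))) :=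
  Submodule.map₂ (mulPow L e) ⊤ K ⊔ LinearMap.range (mulPow L e (singlePow e i₀ y))

/-- The functionals `φ` on `∏ L ^ (eᵢ + 1)` which vanish on `(x o) ^ (e i₀) * L` and for which
`{l | φ ((∏ L ^ eᵢ) * l) = 0}` lies in the cell of `I`. -/
def dualCell (I : Set σ) : Set (Module.Dual F (∀ i, ↥(L ^ (e i + 1)))) :=
  {φ | φ ∈ (LinearMap.range (mulPow L e (singlePow e i₀ (x o)))).dualAnnihilator ∧
    LinearMap.ker ((mulPow L e).compr₂ φ).flip ∈ complCell x o I}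

theorem finrank_range_of_mem_dualCell [Finite σ] {I : Set σ}
    {φ : Module.Dual F (∀ i, ↥(L ^ (e i + 1)))} (hφ : φ ∈ dualCell e i₀ x o I) :
    Module.finrank F (LinearMap.range ((mulPow L e).compr₂ φ)) = I.ncard := by
  have : FiniteDimensional F L := .of_basis x
  let K := LinearMap.ker ((mulPow L e).compr₂ φ).flip
  have hrange := Subspace.finrank_add_finrank_dualCoannihilator_eq
    (LinearMap.range ((mulPow L e).compr₂ φ))
  have hcompl : _ + Module.finrank F K = _ := Submodule.finrank_add_eq_of_isCompl hφ.2.1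
  rw [LinearMap.dualCoannihilator_range_eq_ker_flip] at hrange
  rw [finrank_span_image_eq_ncard x.linearIndependent] at hcompl
  linarith

theorem mem_dualAnnihilator_mulSpan {I : Set σ} {φ : Module.Dual F (∀ i, ↥(L ^ (e i + 1)))}
    (hφ : φ ∈ dualCell e i₀ x o I) : φ ∈ (mulSpan e i₀ (x o)
      (LinearMap.ker ((mulPow L e).compr₂ φ).flip)).dualAnnihilator := by
  rw [mulSpan, Submodule.dualAnnihilator_sup_eq]
  exact ⟨mem_dualAnnihilator_map₂_ker_flip _ φ, hφ.1⟩

variable [Finite σ]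

theorem card_dualCell_le_card_sigma [Finite ι] [Finite F] (I : Set σ) :
    Nat.card (dualCell e i₀ x o I) ≤
      Nat.card (Σ K : complCell x o I, (mulSpan e i₀ (x o) K.1).dualAnnihilator) := by
  have : Module.Finite F L := .of_basis x
  have : Finite L := Module.finite_of_finite F
  have (i : ι) : Module.Finite F ↥(L ^ (e i + 1)) := finite_pow _ _
  have : Finite (Module.Dual F (∀ i, ↥(L ^ (e i + 1)))) := Module.finite_of_finite F
  let f (φ : dualCell e i₀ x o I) :
      Σ K : complCell x o I, (mulSpan e i₀ (x o) K.1).dualAnnihilator :=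
    ⟨⟨_, φ.2.2⟩, φ.1, mem_dualAnnihilator_mulSpan e i₀ x o φ.2⟩
  exact Nat.card_le_card_of_injective f <|
    .of_comp (f := fun y => y.2.1) Subtype.val_injective

variable [Fintype ι]

theorem finrank_dualAnnihilator_mulSpan_le [IsDomain A] {I : Set σ} {K : Submodule F L}
    (hK : K ∈ complCell x o I) :
    Module.finrank F (mulSpan e i₀ (x o) K).dualAnnihilator + I.ncard * (I.ncard + 1) ≤
      ∑ i, Nat.multichoose I.ncard (e i + 1) + I.ncard * (insert o I).ncard := by
  have : Module.Finite F L := .of_basis x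
  have (i : ι) : Module.Finite F ↥(L ^ (e i + 1)) := finite_pow _ _
  let J := Submodule.span F (x '' I)
  let m := mulPow L e (singlePow e i₀ (x o))
  let N := mulSpan e i₀ (x o) K
  have hJ : Module.finrank F J = I.ncard := finrank_span_image_eq_ncard x.linearIndependent I
  have hle := finrank_dualAnnihilator_add_finrank_le e hK.1.codisjoint (N := N) le_sup_left
  rw [hJ] at hle
  by_cases ho : o ∈ I
  · have hxo : x o ∈ J := Submodule.subset_span (Set.mem_image_of_mem x ho)
    have hJN : J.map m ≤ piPow e J ⊓ N := by
      rintro _ ⟨l, hl, rfl⟩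
      exact ⟨mulPow_singlePow_mem_piPow e i₀ hxo hl, Submodule.mem_sup_right ⟨l, rfl⟩⟩
    have hinj : Function.Injective m := mulPow_singlePow_injective e i₀ (x.ne_zero o)
    have hfin := Submodule.finrank_mono hJN
    rw [(J.equivMapOfInjective m hinj).symm.finrank_eq, hJ] at hfin
    rw [Set.insert_eq_of_mem ho, mul_add_one]
    linarith
  · rw [Set.ncard_insert_of_notMem ho]
    linarith

theorem card_dualCell_le [IsDomain A] [Finite F] {I : Set σ} {p : ℕ}
    (hI : ∑ i, Nat.multichoose I.ncard (e i + 1) + I.ncard * Nat.card σ ≤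
      I.ncard * I.ncard + I.ncard * (p + 1)) :
    Nat.card (dualCell e i₀ x o I) ≤ Nat.card F ^ (I.ncard * p) := by
  have : Module.Finite F L := .of_basis x
  have : Finite L := Module.finite_of_finite F
  have (i : ι) : Module.Finite F ↥(L ^ (e i + 1)) := finite_pow _ _
  have : Finite (Module.Dual F (∀ i, ↥(L ^ (e i + 1)))) := Module.finite_of_finite F
  have := Fintype.ofFinite (complCell x o I)
  set h := I.ncard
  set q := Nat.card F
  let N (K : complCell x o I) := (mulSpan e i₀ (x o) K.1).dualAnnihilator
  let w := ∑ i, Nat.multichoose h (e i + 1)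
  have hI : w + h * Nat.card σ ≤ h * h + h * (p + 1) := hI
  have hq : 0 < q := Nat.card_pos
  have hN (K : complCell x o I) :
      Nat.card (N K) * q ^ (h * (h + 1)) ≤ q ^ (w + h * (insert o I).ncard) := by
    rw [Module.natCard_eq_pow_finrank (K := F), ← pow_add]
    exact Nat.pow_le_pow_right hq (finrank_dualAnnihilator_mulSpan_le e i₀ x o K.2)
  refine Nat.le_of_mul_le_mul_right (c := q ^ (h * (h + 1))) ?_ (pow_pos hq _)
  calc Nat.card (dualCell e i₀ x o I) * q ^ (h * (h + 1))
      ≤ (∑ K, Nat.card (N K)) * q ^ (h * (h + 1)) := by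
        rw [← Nat.card_sigma]
        exact Nat.mul_le_mul_right _ (card_dualCell_le_card_sigma e i₀ x o I)
    _ ≤ ∑ _K : complCell x o I, q ^ (w + h * (insert o I).ncard) := by
        rw [Finset.sum_mul]
        exact Finset.sum_le_sum fun K _ => hN K
    _ = q ^ w * (Nat.card (complCell x o I) * q ^ (h * (insert o I).ncard)) := by
        rw [Finset.sum_const, Finset.card_univ, Fintype.card_eq_nat_card, smul_eq_mul, pow_add,
          mul_left_comm]
    _ ≤ q ^ w * q ^ (h * Nat.card σ) := by
        gcongr
        exact card_complCell_mul_le x o I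
    _ ≤ q ^ (h * p) * q ^ (h * (h + 1)) := by
        rw [← pow_add, ← pow_add]
        exact Nat.pow_le_pow_right hq (by linarith)

theorem exists_iSup_range_mulPow_eq_top [IsDomain A] [Finite F] {p : ℕ}
    (hh : ∀ h ≤ Nat.card σ, ∑ i, Nat.multichoose h (e i + 1) + h * Nat.card σ ≤
      h * h + h * (p + 1)) (hq : 2 ^ Nat.card σ < Nat.card F) :
    ∃ a : Fin p → ∀ i, ↥(L ^ e i), (⨆ j, LinearMap.range (mulPow L e (a j))) ⊔
      LinearMap.range (mulPow L e (singlePow e i₀ (x o))) = ⊤ := by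
  have : Module.Finite F L := .of_basis x
  have (d : ℕ) : Module.Finite F ↥(L ^ d) := finite_pow L d
  refine exists_iSup_range_sup_eq_top (mulPow L e) _ p (dualCell e i₀ x o) Set.ncard
    (fun φ hφ => ?_) (fun I φ hφ => finrank_range_of_mem_dualCell e i₀ x o hφ)
    (fun I => card_dualCell_le e i₀ x o (hh _ ?_)) ?_
  · obtain ⟨I, hI⟩ := exists_mem_complCell x o (LinearMap.ker ((mulPow L e).compr₂ φ).flip)
    exact ⟨I, hφ, hI⟩
  · exact I.ncard_le_card
  · have := Fintype.ofFinite σ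
    simpa [Nat.card_eq_fintype_card] using hq

end DualCell

/-! ### Passage to an infinite field -/

section Specialization

theorem exists_aeval_ne_zero {F k τ : Type*} [CommRing F] [CommRing k] [IsDomain k] [Infinite k]
    (hFk : ringChar F ∣ ringChar k) {P : MvPolynomial τ ℤ} {a : τ → F} (ha : aeval a P ≠ 0) :
    ∃ b : τ → k, aeval b P ≠ 0 := by
  by_contra! hk
  have hmap : map (Int.castRingHom k) P = 0 :=
    MvPolynomial.funext fun b => by
      rw [eval_map, map_zero]
      exact hk b
  have hcoeff (m : τ →₀ ℕ) : ((coeff m P : ℤ) : F) = 0 := by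
    have hm := congrArg (coeff m) hmap
    rw [coeff_map, coeff_zero, eq_intCast, CharP.intCast_eq_zero_iff k (ringChar k)] at hm
    rw [CharP.intCast_eq_zero_iff F (ringChar F)]
    exact (Int.natCast_dvd_natCast.2 hFk).trans hm
  refine ha ?_
  rw [aeval_def, ← eval_map, (MvPolynomial.ext _ _ fun m => ?_ : map (algebraMap ℤ F) P = 0),
    map_zero]
  rw [coeff_map, coeff_zero, eq_intCast, hcoeff]

variable {τ m n : Type*} [Fintype n]

/-- The product of `M` with a matrix of new indeterminates. Since these stand for a right inverse of
`M`, the determinant of the product detects whether a specialization of `M` is surjective. -/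
noncomputable def mulGeneric (M : Matrix m n (MvPolynomial τ ℤ)) :
    Matrix m m (MvPolynomial (τ ⊕ n × m) ℤ) :=
  Matrix.of fun i j => ∑ l, rename Sum.inl (M i l) * X (Sum.inr (l, j))

theorem aeval_det_mulGeneric [Fintype m] [DecidableEq m] {K : Type*} [CommRing K]
    (M : Matrix m n (MvPolynomial τ ℤ)) (y : τ ⊕ n × m → K) :
    aeval y (mulGeneric M).det = (M.map (aeval fun s => y (Sum.inl s)) *
      Matrix.of fun j i => y (Sum.inr (j, i))).det := by
  rw [AlgHom.map_det, AlgHom.mapMatrix_apply]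
  congr 1
  ext i j
  simp [mulGeneric, Matrix.mul_apply, aeval_rename, Function.comp_def]

theorem exists_surjective_mulVec_map_aeval [Finite m] {F k : Type*} [CommRing F] [Nontrivial F]
    [Field k] [Infinite k] (hFk : ringChar F ∣ ringChar k) (M : Matrix m n (MvPolynomial τ ℤ))
    {a : τ → F} (ha : Function.Surjective (M.map (aeval a)).mulVec) :
    ∃ b : τ → k, Function.Surjective (M.map (aeval b)).mulVec := by
  classical
  have := Fintype.ofFinite m
  obtain ⟨B, hB⟩ := Matrix.mulVec_surjective_iff_exists_right_inverse.1 ha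
  have hdet : aeval (Sum.elim a fun z => B z.1 z.2) (mulGeneric M).det ≠ 0 := by
    rw [aeval_det_mulGeneric]
    exact hB ▸ Matrix.det_one.trans_ne one_ne_zero
  obtain ⟨y, hy⟩ := exists_aeval_ne_zero hFk hdet
  rw [aeval_det_mulGeneric] at hy
  exact ⟨_, Matrix.mulVec_surjective_iff_exists_right_inverse.2
    ⟨_, (Matrix.mul_assoc _ _ _).symm.trans (Matrix.mul_nonsing_inv _ hy.isUnit)⟩⟩

theorem exists_finite_field_ringChar_dvd (k : Type*) [Field k] (N : ℕ) :
    ∃ (F : Type) (_ : Field F) (_ : Finite F), N < Nat.card F ∧ ringChar F ∣ ringChar k := by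
  obtain hk | hk := CharP.char_is_prime_or_zero k (ringChar k)
  · have := Fact.mk hk
    refine ⟨GaloisField (ringChar k) (N + 1), inferInstance, inferInstance, ?_, ?_⟩
    · rw [GaloisField.card _ _ N.succ_ne_zero]
      exact N.lt_succ_self.trans (Nat.lt_pow_self hk.one_lt)
    · exact (ringChar.eq (GaloisField (ringChar k) (N + 1)) (ringChar k)).dvd
  · obtain ⟨q, hNq, hq⟩ := Nat.exists_infinite_primes (N + 1)
    have := Fact.mk hq
    exact ⟨ZMod q, inferInstance, inferInstance, by rwa [Nat.card_zmod], hk ▸ dvd_zero _⟩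

end Specialization

section MultMatrix

variable {R S σ ι κ : Type*} [CommRing R] [CommRing S]

/-- The surjectivity of `v ↦ (∑ j, g j i * v j)ᵢ` from the families of linear forms to the tuples
of forms of degrees `e i + 1`. -/
def MulSurjective [Fintype κ] (e : ι → ℕ) (g : κ → ι → MvPolynomial σ R) : Prop :=
  ∀ c : ι → MvPolynomial σ R, (∀ i, (c i).IsHomogeneous (e i + 1)) →
    ∃ v : κ → MvPolynomial σ R, (∀ j, (v j).IsHomogeneous 1) ∧ ∀ i, c i = ∑ j, g j i * v j

/-- The matrix of the map `v ↦ (∑ j, g j i * v j)ᵢ` of `MulSurjective` in the monomial bases. -/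
noncomputable def multMatrix (e : ι → ℕ) (g : κ → ι → MvPolynomial σ R) :
    Matrix (Σ i, {m : σ →₀ ℕ | m.degree = e i + 1}) (κ × σ) R :=
  Matrix.of fun m z => coeff m.2 (g z.1 m.1 * X z.2)

theorem multMatrix_map (e : ι → ℕ) (g : κ → ι → MvPolynomial σ R) (f : R →+* S) :
    (multMatrix e g).map f = multMatrix e fun j i => map f (g j i) := by
  ext m z
  simp [multMatrix, ← coeff_map]

theorem isHomogeneous_one_iff_exists [Fintype σ] {f : MvPolynomial σ R} :
    f.IsHomogeneous 1 ↔ ∃ y : σ → R, ∑ l, y l • X l = f := by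
  rw [← mem_homogeneousSubmodule, homogeneousSubmodule_one_eq_span_X,
    Submodule.mem_span_range_iff_exists_fun]

theorem multMatrix_mulVec [Fintype σ] [Fintype κ] (e : ι → ℕ) (g : κ → ι → MvPolynomial σ R)
    (y : κ × σ → R) (m : Σ i, {m : σ →₀ ℕ | m.degree = e i + 1}) :
    (multMatrix e g).mulVec y m = coeff m.2 (∑ j, g j m.1 * ∑ l, y (j, l) • X l) := by
  simp only [Matrix.mulVec, dotProduct, multMatrix, Matrix.of_apply, Fintype.sum_prod_type,
    coeff_sum, Finset.mul_sum, mul_smul_comm, coeff_smul, smul_eq_mul, mul_comm]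

theorem exists_isHomogeneous_coeff_eq [Finite σ] {d : ℕ}
    (y : {m : σ →₀ ℕ | m.degree = d} → R) :
    ∃ f : MvPolynomial σ R, f.IsHomogeneous d ∧ ∀ m, coeff m.1 f = y m := by
  classical
  have := (Finsupp.finite_of_degree_eq (σ := σ) d).fintype
  refine ⟨∑ m, monomial m.1 (y m), .sum _ _ _ fun m _ => isHomogeneous_monomial _ ?_, fun m => ?_⟩
  · exact m.2
  · simp [coeff_sum, coeff_monomial, Subtype.coe_inj]

theorem surjective_multMatrix_mulVec_iff [Fintype σ] [Fintype κ] {e : ι → ℕ}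
    {g : κ → ι → MvPolynomial σ R} (hg : ∀ j i, (g j i).IsHomogeneous (e i)) :
    Function.Surjective (multMatrix e g).mulVec ↔ MulSurjective e g := by
  refine ⟨fun h c hc => ?_, fun h y => ?_⟩
  · obtain ⟨y, hy⟩ := h fun m => coeff m.2 (c m.1)
    have hv (j : κ) := isHomogeneous_one_iff_exists.2 ⟨fun l => y (j, l), rfl⟩
    refine ⟨_, hv, fun i => ?_⟩
    ext m
    by_cases hm : m.degree = e i + 1
    · rw [← multMatrix_mulVec e g y ⟨i, m, hm⟩, hy]
    · rw [(hc i).coeff_eq_zero hm, IsHomogeneous.coeff_eq_zero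
        (.sum _ _ _ fun j _ => (hg j i).mul (hv j)) hm]
  · choose c hc hcy using fun i => exists_isHomogeneous_coeff_eq fun m => y ⟨i, m⟩
    obtain ⟨v, hv, hcv⟩ := h c hc
    choose z hz using fun j => isHomogeneous_one_iff_exists.1 (hv j)
    refine ⟨fun l => z l.1 l.2, ?_⟩
    ext ⟨i, m⟩
    simp only [multMatrix_mulVec, hz, ← hcv, hcy]

theorem exists_isHomogeneous_map_eq {f : R →+* S} (hf : Function.Surjective f) {d : ℕ}
    {g : MvPolynomial σ S} (hg : g.IsHomogeneous d) :
    ∃ G : MvPolynomial σ R, G.IsHomogeneous d ∧ map f G = g := by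
  obtain ⟨G, rfl⟩ := map_surjective f hf g
  refine ⟨homogeneousComponent d G, homogeneousComponent_isHomogeneous d G, ?_⟩
  ext m
  rw [coeff_map, coeff_homogeneousComponent]
  split_ifs with hm
  · rw [coeff_map]
  · rw [map_zero, hg.coeff_eq_zero hm]

/-- The family `a` of tuples, bordered by the tuple whose only nonzero entry is the power
`X o ^ e i₀` at `i₀`. -/
noncomputable def borderPow [DecidableEq ι] (e : ι → ℕ) (i₀ : ι) (o : σ)
    (a : κ → ι → MvPolynomial σ R) : Option κ → ι → MvPolynomial σ R :=
  fun j => j.elim (Pi.single i₀ (X o ^ e i₀)) a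

variable [DecidableEq ι] (e : ι → ℕ) (i₀ : ι) (o : σ)

theorem isHomogeneous_borderPow {a : κ → ι → MvPolynomial σ R}
    (ha : ∀ j i, (a j i).IsHomogeneous (e i)) (j : Option κ) (i : ι) :
    (borderPow e i₀ o a j i).IsHomogeneous (e i) := by
  cases j with
  | some j => exact ha j i
  | none =>
    obtain rfl | hi := eq_or_ne i i₀
    · simpa [borderPow] using isHomogeneous_X_pow o (e i)
    · simpa [borderPow, hi] using isHomogeneous_zero σ R (e i)

theorem map_borderPow (f : R →+* S) (a : κ → ι → MvPolynomial σ R) (j : Option κ) (i : ι) :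
    map f (borderPow e i₀ o a j i) = borderPow e i₀ o (fun j i => map f (a j i)) j i := by
  cases j with
  | some j => rfl
  | none => simp [borderPow, Pi.single_apply, apply_ite (map f)]

theorem surjective_map_multMatrix_borderPow_mulVec_iff [Fintype σ] [Fintype κ] (f : R →+* S)
    {a : κ → ι → MvPolynomial σ R} (ha : ∀ j i, (a j i).IsHomogeneous (e i)) :
    Function.Surjective ((multMatrix e (borderPow e i₀ o a)).map f).mulVec ↔
      MulSurjective e (borderPow e i₀ o fun j i => map f (a j i)) := by
  rw [multMatrix_map]
  simp only [map_borderPow]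
  exact surjective_multMatrix_mulVec_iff <|
    isHomogeneous_borderPow e i₀ o fun j i => (ha j i).map f

theorem exists_mulSurjective_borderPow_of_ringChar_dvd [Finite ι] [Finite σ] [Fintype κ]
    {F k : Type*} [CommRing F] [Nontrivial F] [Field k] [Infinite k]
    (hFk : ringChar F ∣ ringChar k) {a : κ → ι → MvPolynomial σ F}
    (ha : ∀ j i, (a j i).IsHomogeneous (e i)) (hsurj : MulSurjective e (borderPow e i₀ o a)) :
    ∃ b : κ → ι → MvPolynomial σ k,
      (∀ j i, (b j i).IsHomogeneous (e i)) ∧ MulSurjective e (borderPow e i₀ o b) := by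
  have := Fintype.ofFinite σ
  -- `F` is a quotient of a polynomial ring over `ℤ`, with the elements of `F` as indeterminates.
  let f : MvPolynomial F ℤ →ₐ[ℤ] F := aeval id
  have hf : Function.Surjective f.toRingHom := fun s => ⟨X s, aeval_X id s⟩
  choose G hG hGa using fun j i => exists_isHomogeneous_map_eq hf (ha j i)
  have hM : Function.Surjective ((multMatrix e (borderPow e i₀ o G)).map f).mulVec :=
    (surjective_map_multMatrix_borderPow_mulVec_iff e i₀ o _ hG).2
      (by simpa only [hGa] using hsurj)
  have (d : ℕ) : Finite {m : σ →₀ ℕ | m.degree = d} := Finsupp.finite_of_degree_eq d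
  obtain ⟨b, hb⟩ := exists_surjective_mulVec_map_aeval hFk _ (a := id) hM
  exact ⟨_, fun j i => (hG j i).map (aeval (R := ℤ) b).toRingHom,
    (surjective_map_multMatrix_borderPow_mulVec_iff e i₀ o _ hG).1 hb⟩

end MultMatrix

/-! ### Forms over a field -/

section Field

variable {σ ι : Type*} [Finite σ] [Fintype ι] [DecidableEq ι] (e : ι → ℕ) (i₀ : ι) (o : σ)

theorem span_range_X_pow_eq_homogeneousSubmodule (R σ : Type*) [CommRing R] (d : ℕ) :
    Submodule.span R (Set.range (X : σ → MvPolynomial σ R)) ^ d = homogeneousSubmodule σ R d := by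
  rw [← homogeneousSubmodule_one_eq_span_X, homogeneousSubmodule_one_pow]

theorem exists_sum_eq_of_mem_iSup_range {R κ V W : Type*} [Semiring R] [Fintype κ]
    [AddCommMonoid V] [Module R V] [AddCommMonoid W] [Module R W] {f : κ → V →ₗ[R] W} {w : W}
    (hw : w ∈ ⨆ j, LinearMap.range (f j)) : ∃ v : κ → V, ∑ j, f j (v j) = w := by
  obtain ⟨z, hz, rfl⟩ := (Submodule.mem_iSup_iff_exists_finsupp _ _).1 hw
  choose v hv using hz
  exact ⟨v, by simp only [hv, Finsupp.sum_fintype, implies_true]⟩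

theorem exists_mulSurjective_borderPow_of_finite {F : Type*} [Field F] [Finite F] {p : ℕ}
    (hh : ∀ h ≤ Nat.card σ, ∑ i, Nat.multichoose h (e i + 1) + h * Nat.card σ ≤
      h * h + h * (p + 1)) (hq : 2 ^ Nat.card σ < Nat.card F) :
    ∃ a : Fin p → ι → MvPolynomial σ F,
      (∀ j i, (a j i).IsHomogeneous (e i)) ∧ MulSurjective e (borderPow e i₀ o a) := by
  let L := Submodule.span F (Set.range (X : σ → MvPolynomial σ F))
  have hL (d : ℕ) : L ^ d = homogeneousSubmodule σ F d :=
    span_range_X_pow_eq_homogeneousSubmodule F σ d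
  have hL₁ (l : L) : (l : MvPolynomial σ F).IsHomogeneous 1 := by
    rw [← mem_homogeneousSubmodule, ← hL, pow_one]
    exact l.2
  let x : Module.Basis σ F L := .span (linearIndependent_X σ F)
  have hx : (x o : MvPolynomial σ F) = X o :=
    congrArg Subtype.val (Module.Basis.span_apply (linearIndependent_X σ F) o)
  obtain ⟨a, ha⟩ := exists_iSup_range_mulPow_eq_top e i₀ x o hh hq
  refine ⟨fun j i => a j i, fun j i => ?_, fun c hc => ?_⟩
  · rw [← mem_homogeneousSubmodule, ← hL]
    exact (a j i).2
  let c' (i : ι) : ↥(L ^ (e i + 1)) := ⟨c i, (hL _).symm ▸ hc i⟩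
  obtain ⟨u, hu, _, ⟨w, rfl⟩, huw⟩ := Submodule.mem_sup.1 (ha.symm ▸ Submodule.mem_top (x := c'))
  obtain ⟨v, rfl⟩ := exists_sum_eq_of_mem_iSup_range hu
  refine ⟨fun j => j.elim w.1 fun j => (v j).1, fun j => ?_, fun i => ?_⟩
  · cases j <;> exact hL₁ _
  have hci : (∑ j, (a j i : MvPolynomial σ F) * v j) +
      (if i = i₀ then (x o : MvPolynomial σ F) ^ e i₀ * w else 0) = c i := by
    rw [← coe_mulPow_singlePow_apply]
    simpa using congrArg (fun u => (u i : MvPolynomial σ F)) huw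
  rw [← hci, Fintype.sum_option, add_comm, hx]
  simp [borderPow, Pi.single_apply]

theorem exists_mulSurjective_borderPow {k : Type*} [Field k] [Infinite k] {p : ℕ}
    (hi₀ : 2 ≤ e i₀) (hp : ∑ i, Nat.multichoose (Nat.card σ) (e i + 1) ≤ Nat.card σ * (p + 1)) :
    ∃ a : Fin p → ι → MvPolynomial σ k,
      (∀ j i, (a j i).IsHomogeneous (e i)) ∧ MulSurjective e (borderPow e i₀ o a) := by
  obtain ⟨F, _, _, hq, hFk⟩ := exists_finite_field_ringChar_dvd k (2 ^ Nat.card σ)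
  obtain ⟨a, ha, hsurj⟩ := exists_mulSurjective_borderPow_of_finite e i₀ o
    (fun h hh => sum_multichoose_add_mul_le e hi₀ hp hh) hq
  exact exists_mulSurjective_borderPow_of_ringChar_dvd e i₀ o hFk ha hsurj

end Field

/-! ### Descent to the fat linear space -/

section FatRing

theorem choose_add_add_one_eq_multichoose (r d : ℕ) :
    (d + r + 1).choose (r + 1) = Nat.multichoose (r + 2) d := by
  rw [Nat.multichoose_eq, show r + 2 + d - 1 = d + r + 1 by omega]
  exact Nat.choose_symm_of_eq_add (by omega)

theorem mk_mem_fatRingComp {k : Type*} [Field k] {r t e : ℕ} {f : MvPolynomial (Fin (r + 2)) k}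
    (hf : f.IsHomogeneous e) : Ideal.Quotient.mk _ f ∈ fatRingComp k r t e :=
  ⟨f, hf, rfl⟩

theorem mk_X_zero_mul_borderPow_none {k κ ι : Type*} [Field k] [DecidableEq ι] {r t : ℕ}
    {e : ι → ℕ} {i₀ : ι} (ht : t = e i₀ + 1) (a : κ → ι → MvPolynomial (Fin (r + 2)) k) (i : ι) :
    Ideal.Quotient.mk (Ideal.span {(X 0 : MvPolynomial (Fin (r + 2)) k) ^ t})
      (X 0 * borderPow e i₀ 0 a none i) = 0 := by
  rw [Ideal.Quotient.eq_zero_iff_mem]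
  obtain rfl | hi := eq_or_ne i i₀
  · simp [borderPow, ← pow_succ', ht]
  · simp [borderPow, hi]

theorem stmt0_general (k : Type*) [Field k] [Infinite k] {ι : Type*} [Fintype ι]
    (r p t : ℕ) (d : ι → ℕ) (i₀ : ι) (hd : ∀ i, 1 ≤ d i) (ht : t = d i₀) (ht3 : 3 ≤ t)
    (hp : (∑ i, Nat.choose (d i + r + 1) (r + 1)) - 1 ≤ (r + 2) * p + r + 1) :
    ∃ (a : ι → Fin p → fatRing k r t) (b : ι → fatRing k r t),
      (∀ i j, a i j ∈ fatRingComp k r t (d i - 1)) ∧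
      (∀ i, b i ∈ fatRingComp k r t (d i - 1)) ∧
      (∀ i, Ideal.Quotient.mk (Ideal.span {(X 0 : MvPolynomial (Fin (r + 2)) k) ^ t})
          (X 0) * b i = 0) ∧
      (∀ c : ι → fatRing k r t, (∀ i, c i ∈ fatRingComp k r t (d i)) →
        ∃ (v : Fin p → fatRing k r t) (w : fatRing k r t),
          (∀ j, v j ∈ fatRingComp k r t 1) ∧ w ∈ fatRingComp k r t 1 ∧
          ∀ i, c i = (∑ j, a i j * v j) + b i * w) := by
  classical
  let π := Ideal.Quotient.mk (Ideal.span {(X 0 : MvPolynomial (Fin (r + 2)) k) ^ t})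
  obtain ⟨e, rfl⟩ : ∃ e : ι → ℕ, d = fun i => e i + 1 :=
    ⟨fun i => d i - 1, _root_.funext fun i => (Nat.sub_add_cancel (hd i)).symm⟩
  have ht : t = e i₀ + 1 := ht
  have hp' : ∑ i, Nat.multichoose (r + 2) (e i + 1) ≤ (r + 2) * (p + 1) := by
    simp only [choose_add_add_one_eq_multichoose] at hp
    linarith [Nat.sub_le_iff_le_add.1 hp]
  obtain ⟨g, hg, hsurj⟩ := exists_mulSurjective_borderPow (k := k) e i₀ (0 : Fin (r + 2))
    (by omega) (by rwa [Nat.card_fin])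
  refine ⟨fun i j => π (g j i), fun i => π (borderPow e i₀ 0 g none i),
    fun i j => mk_mem_fatRingComp (hg j i),
    fun i => mk_mem_fatRingComp (isHomogeneous_borderPow e i₀ 0 hg none i),
    fun i => (map_mul π _ _).symm.trans (mk_X_zero_mul_borderPow_none ht g i), fun c hc => ?_⟩
  choose f hf hfc using hc
  obtain ⟨v, hv, hfv⟩ := hsurj f hf
  refine ⟨fun j => π (v (some j)), π (v none), fun j => mk_mem_fatRingComp (hv _),
    mk_mem_fatRingComp (hv none), fun i => ?_⟩
  have hfc : π (f i) = c i := hfc i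
  rw [← hfc, hfv i, Fintype.sum_option, map_add]
  simp only [map_sum, map_mul]
  exact add_comm _ _

end FatRing

/-- The maximal rank lemma (Lemmas 5.1–5.3, graded-module form): for
`2 ≤ d₁ ≤ ⋯ ≤ d_{s-1} < d_s = t` with `t ≥ 3` and
`(r+2)p + r + 1 ≥ Σᵢ C(dᵢ+r+1, r+1) - 1`, there exist homogeneous elements
`a_{i,j} ∈ R_{dᵢ-1}` and `bᵢ ∈ R_{dᵢ-1}` with `x̄₀·bᵢ = 0` such that the linear map
`(R₁)^{p+1} → ⊕ᵢ R_{dᵢ}`, `(v₁,…,v_p,w) ↦ (Σⱼ a_{i,j}·vⱼ + bᵢ·w)ᵢ`, is surjective. -/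
theorem stmt0 (k : Type*) [Field k] [IsAlgClosed k] [CharZero k]
    (r s p t : ℕ) (hs : 1 ≤ s) (d : Fin s → ℕ) (hmono : Monotone d)
    (hd2 : ∀ i, 2 ≤ d i)
    (hlast : ∀ _ : 2 ≤ s, d ⟨s - 2, by omega⟩ < d ⟨s - 1, by omega⟩)
    (ht : t = d ⟨s - 1, by omega⟩) (ht3 : 3 ≤ t)
    (hp : (∑ i, Nat.choose (d i + r + 1) (r + 1)) - 1 ≤ (r + 2) * p + r + 1) :
    ∃ (a : Fin s → Fin p → fatRing k r t) (b : Fin s → fatRing k r t),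
      (∀ i j, a i j ∈ fatRingComp k r t (d i - 1)) ∧
      (∀ i, b i ∈ fatRingComp k r t (d i - 1)) ∧
      (∀ i, Ideal.Quotient.mk (Ideal.span {(X 0 : MvPolynomial (Fin (r + 2)) k) ^ t})
          (X 0) * b i = 0) ∧
      (∀ c : Fin s → fatRing k r t, (∀ i, c i ∈ fatRingComp k r t (d i)) →
        ∃ (v : Fin p → fatRing k r t) (w : fatRing k r t),
          (∀ j, v j ∈ fatRingComp k r t 1) ∧ w ∈ fatRingComp k r t 1 ∧
          ∀ i, c i = (∑ j, a i j * v j) + b i * w) :=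
  stmt0_general k r p t d ⟨s - 1, by omega⟩ (fun i => one_le_two.trans (hd2 i)) ht ht3 hp
end

section
/- Let r ≥ 0, s ≥ 1, p ≥ 0 and u be integers with 1 ≤ u ≤ r+2, and let d_1 ≤ … ≤ d_s be integers with d_i ≥ 2 for all i, with d_{s-1} < d_s when s ≥ 2, and with d_s ≥ 3. If (r+2)·p + r + 1 ≥ h^0(r+2, dd) − 1, then, as integers, h^0(u, dd) + (r + 1 − u)·u ≤ p·u. -/
/-!
Let `S u` be the number `h⁰(u, dd)`. Passing from `u` to `u + 1` variables multiplies the number of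
monomials of degree `e` by `(u + e) / u`; hence the slope `S u / u` never decreases when all degrees
are positive, and a single degree at least `3` makes it grow by at least `1` at each step.
So `S u / u - u` is monotone on `u ≥ 1`. Comparing `u` with `n = r + 2`, where the hypothesis says
`S n / n ≤ p + 1`, gives `S u / u ≤ p + 1 - (n - u)`, which is the claim.
-/

theorem mul_multichoose_succ_left_s1 (u e : ℕ) :
    u * (u + 1).multichoose e = (u + e) * u.multichoose e := by
  cases u with
  | zero => cases e <;> simp
  | succ v =>
    have h := Nat.choose_mul_succ_eq (v + e) e
    rw [show v + e + 1 - e = v + 1 by omega] at h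
    rw [Nat.multichoose_eq, Nat.multichoose_eq, show v + 1 + 1 + e - 1 = v + e + 1 by omega,
      show v + 1 + e - 1 = v + e by omega]
    linarith

theorem two_mul_multichoose_two_right (u : ℕ) : 2 * u.multichoose 2 = u * (u + 1) := by
  induction u with
  | zero => simp
  | succ u ih =>
    rw [Nat.multichoose_succ_succ, Nat.multichoose_one_right]
    linarith

theorem monotone_multichoose {u : ℕ} (hu : 1 ≤ u) : Monotone u.multichoose := by
  obtain ⟨v, rfl⟩ := Nat.exists_eq_add_of_le' hu
  refine monotone_nat_of_le_succ fun e => ?_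
  rw [Nat.multichoose_succ_succ]
  exact Nat.le_add_left _ _

theorem multichoose_eq_choose_pred {u : ℕ} (hu : 1 ≤ u) (e : ℕ) :
    u.multichoose e = (e + u - 1).choose (u - 1) := by
  rw [Nat.multichoose_eq, Nat.add_comm u e]
  exact Nat.choose_symm_of_eq_add (by omega)

theorem succ_mul_multichoose_le (u : ℕ) {e : ℕ} (he : 1 ≤ e) :
    (u + 1) * u.multichoose e ≤ u * (u + 1).multichoose e := by
  rw [mul_multichoose_succ_left_s1]
  gcongr

theorem succ_mul_multichoose_add_le {u e : ℕ} (hu : 1 ≤ u) (he : 3 ≤ e) :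
    (u + 1) * u.multichoose e + u * (u + 1) ≤ u * (u + 1).multichoose e :=
  calc (u + 1) * u.multichoose e + u * (u + 1)
      = (u + 1) * u.multichoose e + 2 * u.multichoose 2 := by rw [two_mul_multichoose_two_right]
    _ ≤ (u + 1) * u.multichoose e + 2 * u.multichoose e := by
        gcongr
        exact monotone_multichoose hu (by omega)
    _ = (u + 3) * u.multichoose e := by ring
    _ ≤ (u + e) * u.multichoose e := by gcongr
    _ = u * (u + 1).multichoose e := (mul_multichoose_succ_left_s1 u e).symm

section MonomialCount

variable {ι : Type*} [Fintype ι]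

/-- The number `h⁰(u, dd)` of pairs of an index `i` and a monomial of degree `d i` in `u` variables.
`Nat.multichoose u e` counts monomials of degree `e`, as multisets of `e` variables; for `u ≥ 1` it
is `C(e + u - 1, u - 1)`. -/
def monomialCount (d : ι → ℕ) (u : ℕ) : ℕ :=
  ∑ i, u.multichoose (d i)

theorem monomialCount_eq_sum_choose (d : ι → ℕ) {u : ℕ} (hu : 1 ≤ u) :
    monomialCount d u = ∑ i, (d i + u - 1).choose (u - 1) :=
  Finset.sum_congr rfl fun i _ => multichoose_eq_choose_pred hu (d i)

theorem succ_mul_monomialCount_add_le {d : ι → ℕ} (hd : ∀ i, 1 ≤ d i) (hd3 : ∃ j, 3 ≤ d j)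
    {u : ℕ} (hu : 1 ≤ u) :
    (u + 1) * monomialCount d u + u * (u + 1) ≤ u * monomialCount d (u + 1) := by
  classical
  obtain ⟨j, hj⟩ := hd3
  have hrest : (u + 1) * ∑ i ∈ Finset.univ.erase j, u.multichoose (d i)
      ≤ u * ∑ i ∈ Finset.univ.erase j, (u + 1).multichoose (d i) := by
    rw [Finset.mul_sum, Finset.mul_sum]
    exact Finset.sum_le_sum fun i _ => succ_mul_multichoose_le u (hd i)
  have hlarge := succ_mul_multichoose_add_le hu hj
  simp only [monomialCount, ← Finset.add_sum_erase _ _ (Finset.mem_univ j), mul_add]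
  linarith

theorem monotoneOn_monomialCount_div_sub {d : ι → ℕ} (hd : ∀ i, 1 ≤ d i) (hd3 : ∃ j, 3 ≤ d j) :
    MonotoneOn (fun u : ℕ => (monomialCount d u : ℚ) / u - u) (Set.Ici 1) := by
  refine monotoneOn_nat_Ici_of_le_succ fun u hu => ?_
  have hstep : ((u : ℚ) + 1) * monomialCount d u + u * (u + 1) ≤ u * monomialCount d (u + 1) := by
    exact_mod_cast succ_mul_monomialCount_add_le hd hd3 hu
  have hu0 : (0 : ℚ) < u := by exact_mod_cast hu
  have hslope : (monomialCount d u : ℚ) / u + 1 ≤ monomialCount d (u + 1) / (u + 1) := by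
    rw [div_add_one hu0.ne', div_le_div_iff₀ hu0 (by positivity)]
    linarith
  push_cast
  linarith

theorem monomialCount_le_of_le_mul {d : ι → ℕ} (hd : ∀ i, 1 ≤ d i) (hd3 : ∃ j, 3 ≤ d j) {n u : ℕ}
    (hu : 1 ≤ u) (hun : u ≤ n) {q : ℤ} (hn : (monomialCount d n : ℤ) ≤ q * n) :
    (monomialCount d u : ℤ) ≤ (q - n + u) * u := by
  have hu0 : (0 : ℚ) < u := by exact_mod_cast hu
  have hn0 : (0 : ℚ) < n := by exact_mod_cast hu.trans hun
  have hslope : (monomialCount d n : ℚ) / n ≤ q := by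
    rw [div_le_iff₀ hn0]
    exact_mod_cast hn
  have hmono : (monomialCount d u : ℚ) / u - u ≤ monomialCount d n / n - n :=
    monotoneOn_monomialCount_div_sub hd hd3 hu (hu.trans hun) hun
  have hle : (monomialCount d u : ℚ) ≤ (q - n + u) * u := by
    rw [← div_le_iff₀ hu0]
    linarith
  exact_mod_cast hle

theorem stmt1_general (r p u : ℕ) (hu1 : 1 ≤ u) (hu2 : u ≤ r + 2)
    (d : ι → ℕ) (hd : ∀ i, 1 ≤ d i) (hd3 : ∃ j, 3 ≤ d j)
    (hp : (∑ i, Nat.choose (d i + r + 1) (r + 1)) - 1 ≤ (r + 2) * p + r + 1) :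
    (∑ i, (Nat.choose (d i + u - 1) (u - 1) : ℤ)) + ((r : ℤ) + 1 - (u : ℤ)) * u
      ≤ (p : ℤ) * u := by
  have hcount : monomialCount d (r + 2) ≤ (p + 1) * (r + 2) := by
    have hsum : monomialCount d (r + 2) = ∑ i, (d i + r + 1).choose (r + 1) :=
      monomialCount_eq_sum_choose d (by omega)
    rw [← hsum] at hp
    linarith [Nat.sub_le_iff_le_add.mp hp]
  have hbound := monomialCount_le_of_le_mul hd hd3 hu1 hu2 (q := p + 1) (by exact_mod_cast hcount)
  rw [monomialCount_eq_sum_choose d hu1] at hbound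
  push_cast at hbound
  linarith

end MonomialCount

/-- Sublemma 5.7 (key numerical inequality for the maximal rank lemma):
for `1 ≤ u ≤ r+2`, the hypothesis `(r+2)p + r + 1 ≥ h⁰(r+2, dd) - 1` implies
`h⁰(u, dd) + (r+1-u)·u ≤ p·u` as integers, where `h⁰(v, e) = C(e+v-1, v-1)`. -/
theorem stmt1 (r s p u : ℕ) (hs : 1 ≤ s) (hu1 : 1 ≤ u) (hu2 : u ≤ r + 2)
    (d : Fin s → ℕ) (hmono : Monotone d) (hd2 : ∀ i, 2 ≤ d i)
    (hlast : ∀ _ : 2 ≤ s, d ⟨s - 2, by omega⟩ < d ⟨s - 1, by omega⟩)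
    (hd3 : 3 ≤ d ⟨s - 1, by omega⟩)
    (hp : (∑ i, Nat.choose (d i + r + 1) (r + 1)) - 1 ≤ (r + 2) * p + r + 1) :
    (∑ i, (Nat.choose (d i + u - 1) (u - 1) : ℤ)) + ((r : ℤ) + 1 - (u : ℤ)) * u
      ≤ (p : ℤ) * u :=
  stmt1_general r p u hu1 hu2 d (fun i => one_le_two.trans (hd2 i)) ⟨_, hd3⟩ hp
end

section
/- Let r ≥ 0 and s ≥ 1 be integers and let d_1, …, d_s be integers with d_i ≥ 2 for all i and d_s ≥ 3. Then s·(r+2) + (r+1)^2 ≤ Σ_{i=1}^s C(d_i + r + 1, r + 1). -/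
/-! `C(d + r + 1, r + 1)` counts the monomials of degree `d` in `n = r + 2` variables, and this
number increases with `d`. In degree one it is `n`. In degree three there are `n²` monomials
`xᵢ² xⱼ` (with `i = j` allowed), besides the `C(n, 3)` squarefree ones. Hence each summand is at
least `n`, and one of them is at least `n² = n + (r + 1)(r + 2)`. -/

lemma card_nsmul_add_le_sum {ι M : Type*} [AddCommMonoid M] [PartialOrder M]
    [IsOrderedAddMonoid M] {t : Finset ι} {f : ι → M} {b c : M} {j : ι} (hj : j ∈ t)
    (hb : ∀ i ∈ t, b ≤ f i) (hc : b + c ≤ f j) : t.card • b + c ≤ ∑ i ∈ t, f i := by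
  classical
  calc t.card • b + c = ∑ i ∈ t, (b + if i = j then c else 0) := by
        rw [Finset.sum_add_distrib, Finset.sum_const, Finset.sum_ite_eq_of_mem' t j _ hj]
    _ ≤ ∑ i ∈ t, f i := Finset.sum_le_sum fun i hi ↦ by
        split_ifs with hij
        · exact hij ▸ hc
        · exact (add_zero b).symm ▸ hb i hi

lemma sq_eq_add_two_mul_choose_two (n : ℕ) : n ^ 2 = n + 2 * n.choose 2 := by
  induction n with
  | zero => rfl
  | succ n ih =>
    rw [Nat.choose_succ_succ', Nat.choose_one_right]
    linarith

lemma choose_add_two_three (n : ℕ) : (n + 2).choose 3 = n ^ 2 + n.choose 3 := by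
  calc (n + 2).choose 3 = n.choose 1 + 2 * n.choose 2 + n.choose 3 := by
        simp only [Nat.choose_succ_succ']
        ring
    _ = n ^ 2 + n.choose 3 := by rw [Nat.choose_one_right, ← sq_eq_add_two_mul_choose_two]

lemma add_two_le_choose_add_add_one (r : ℕ) {d : ℕ} (hd : 1 ≤ d) :
    r + 2 ≤ (d + r + 1).choose (r + 1) :=
  calc r + 2 = (r + 2).choose (r + 1) := (Nat.choose_succ_self_right (r + 1)).symm
    _ ≤ (d + r + 1).choose (r + 1) := Nat.choose_le_choose _ (by lia)

lemma add_two_sq_le_choose_add_add_one (r : ℕ) {d : ℕ} (hd : 3 ≤ d) :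
    (r + 2) ^ 2 ≤ (d + r + 1).choose (r + 1) :=
  calc (r + 2) ^ 2 ≤ (r + 2 + 2).choose 3 := by
        rw [choose_add_two_three]
        exact Nat.le_add_right _ _
    _ = (r + 4).choose (r + 1) := (Nat.choose_symm_add (a := r + 1) (b := 3)).symm
    _ ≤ (d + r + 1).choose (r + 1) := Nat.choose_le_choose _ (by lia)

theorem stmt9_general {ι : Type*} (r : ℕ) {t : Finset ι} {d : ι → ℕ} (hd1 : ∀ i ∈ t, 1 ≤ d i)
    {j : ι} (hj : j ∈ t) (hd3 : 3 ≤ d j) :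
    t.card * (r + 2) + (r + 1) * (r + 2) ≤ ∑ i ∈ t, (d i + r + 1).choose (r + 1) :=
  card_nsmul_add_le_sum hj (fun i hi ↦ add_two_le_choose_add_add_one r (hd1 i hi)) <|
    calc r + 2 + (r + 1) * (r + 2) = (r + 2) ^ 2 := by ring
      _ ≤ (d j + r + 1).choose (r + 1) := add_two_sq_le_choose_add_add_one r hd3

/-- Case `u = 1` of Sublemma 5.7: if all `dᵢ ≥ 2` and `d_s ≥ 3`, then
`s(r+2) + (r+1)² ≤ Σᵢ C(dᵢ + r + 1, r + 1)`. -/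
theorem stmt9 (r s : ℕ) (hs : 1 ≤ s) (d : Fin s → ℕ)
    (hd2 : ∀ i, 2 ≤ d i) (hd3 : 3 ≤ d ⟨s - 1, by omega⟩) :
    s * (r + 2) + (r + 1) ^ 2 ≤ ∑ i, Nat.choose (d i + r + 1) (r + 1) := by
  have h := stmt9_general r (fun i _ ↦ one_le_two.trans (hd2 i)) (Finset.mem_univ _) hd3
  rw [Finset.card_fin] at h
  linarith
end

section
/- Let r ≥ 0 and s ≥ 1 be integers and let d_1, …, d_s be integers with d_i ≥ 2 for all i and d_s ≥ 3. Define f : ℕ → ℤ by f(v) := Σ_{i=1}^s C(d_i + v − 1, v − 1) + (r + 1 − v)·v. Then for every integer u ≥ 1 one has f(u+2) − 2·f(u+1) + f(u) = Σ_{i=1}^s C(d_i + u − 1, u + 1) − 2, and this quantity is nonnegative; in particular f is convex on the integers u ≥ 1. -/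
/-!
Applying Pascal's rule twice to `v ↦ C(d + v - 1, v - 1)` shows that its second difference at
`u ≥ 1` is `C(d + u - 1, u + 1)`, while the quadratic term `(r + 1 - v) v` contributes the constant
`-2`. All these binomial coefficients are nonnegative, and a single `d i ≥ 3` already contributes
at least `C(u + 2, u + 1) = u + 2`, which outweighs the `-2`.
-/

open scoped fwdDiff

section SecondDifference

theorem fwdDiff_iter_two_apply {M G : Type*} [AddCommMonoid M] [AddCommGroup G] (h : M)
    (f : M → G) (y : M) :
    (Δ_[h])^[2] f y = f (y + h + h) - 2 • f (y + h) + f y := by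
  simp only [Function.iterate_succ_apply, Function.iterate_zero_apply, fwdDiff, two_nsmul]
  abel

variable {R : Type*} [CommRing R]

theorem fwdDiff_iter_two_sub_mul_self (a : R) :
    (Δ_[1])^[2] (fun v : ℕ ↦ (a - v) * v) = fun _ ↦ -2 := by
  funext u
  rw [fwdDiff_iter_two_apply]
  push_cast
  ring

theorem fwdDiff_iter_two_choose_add_left (d : ℕ) :
    (Δ_[1])^[2] (fun k : ℕ ↦ ((d + k).choose k : R)) =
      fun k ↦ ((d + k).choose (k + 2) : R) := by
  funext k
  have pascal (n j : ℕ) : ((n + 1).choose (j + 1) : R) = n.choose j + n.choose (j + 1) := by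
    rw [Nat.choose_succ_succ', Nat.cast_add]
  rw [fwdDiff_iter_two_apply]
  simp only [← add_assoc, pascal]
  ring

theorem fwdDiff_iter_two_choose_add_sub_one (d : ℕ) {u : ℕ} (hu : 1 ≤ u) :
    (Δ_[1])^[2] (fun v : ℕ ↦ ((d + v - 1).choose (v - 1) : R)) u =
      ((d + u - 1).choose (u + 1) : R) := by
  obtain ⟨k, rfl⟩ := Nat.exists_eq_add_of_le' hu
  rw [← fwdDiff_iter_comp_add]
  exact congrFun (fwdDiff_iter_two_choose_add_left d) k

theorem fwdDiff_iter_two_sum_choose_add_sub_mul_self {ι : Type*} (t : Finset ι) (d : ι → ℕ)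
    (a : R) {u : ℕ} (hu : 1 ≤ u) :
    (Δ_[1])^[2] (fun v : ℕ ↦ ∑ i ∈ t, ((d i + v - 1).choose (v - 1) : R) + (a - v) * v) u =
      ∑ i ∈ t, ((d i + u - 1).choose (u + 1) : R) - 2 := by
  have split : (fun v : ℕ ↦ ∑ i ∈ t, ((d i + v - 1).choose (v - 1) : R) + (a - v) * v) =
      ∑ i ∈ t, (fun v : ℕ ↦ ((d i + v - 1).choose (v - 1) : R)) + fun v : ℕ ↦ (a - v) * v := by
    funext v
    simp only [Pi.add_apply, Finset.sum_apply]
  rw [split, fwdDiff_iter_add, fwdDiff_iter_finsetSum, fwdDiff_iter_two_sub_mul_self,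
    Pi.add_apply, Finset.sum_apply, ← sub_eq_add_neg]
  simp only [fwdDiff_iter_two_choose_add_sub_one _ hu]

end SecondDifference

theorem add_one_le_choose_of_lt {n k : ℕ} (h : k < n) : k + 1 ≤ n.choose k :=
  (Nat.choose_succ_self_right k).ge.trans (Nat.choose_le_choose k h)

theorem add_two_le_sum_choose {ι : Type*} {t : Finset ι} {d : ι → ℕ} (hd : ∃ i ∈ t, 3 ≤ d i)
    (u : ℕ) : u + 2 ≤ ∑ i ∈ t, (d i + u - 1).choose (u + 1) := by
  obtain ⟨i, hi, hdi⟩ := hd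
  calc u + 2 ≤ (d i + u - 1).choose (u + 1) := add_one_le_choose_of_lt (by lia)
    _ ≤ ∑ i ∈ t, (d i + u - 1).choose (u + 1) :=
      Finset.single_le_sum_of_canonicallyOrdered (f := fun i ↦ (d i + u - 1).choose (u + 1)) hi

theorem stmt11_general {ι : Type*} {t : Finset ι} {d : ι → ℕ} (hd : ∃ i ∈ t, 3 ≤ d i) (r : ℤ)
    {f : ℕ → ℤ}
    (hf : ∀ v : ℕ, f v = ∑ i ∈ t, ((d i + v - 1).choose (v - 1) : ℤ) + (r + 1 - v) * v)
    {u : ℕ} (hu : 1 ≤ u) :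
    f (u + 2) - 2 * f (u + 1) + f u = ∑ i ∈ t, ((d i + u - 1).choose (u + 1) : ℤ) - 2 ∧
      (u : ℤ) ≤ f (u + 2) - 2 * f (u + 1) + f u := by
  have second_difference :
      f (u + 2) - 2 * f (u + 1) + f u = ∑ i ∈ t, ((d i + u - 1).choose (u + 1) : ℤ) - 2 := by
    rw [← fwdDiff_iter_two_sum_choose_add_sub_mul_self t d (r + 1) hu, ← funext hf,
      fwdDiff_iter_two_apply, nsmul_eq_mul, Nat.cast_ofNat]
  have lower_bound : (u : ℤ) + 2 ≤ ∑ i ∈ t, ((d i + u - 1).choose (u + 1) : ℤ) :=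
    mod_cast add_two_le_sum_choose hd u
  exact ⟨second_difference, second_difference ▸ le_sub_iff_add_le.mpr lower_bound⟩

/-- Convexity argument concluding the proof of Sublemma 5.7: for
`f(v) = Σᵢ C(dᵢ + v - 1, v - 1) + (r + 1 - v)·v`, the second discrete derivative at any
`u ≥ 1` equals `Σᵢ C(dᵢ + u - 1, u + 1) - 2` and is nonnegative, so `f` is convex. -/
theorem stmt11 (r s : ℕ) (hs : 1 ≤ s) (d : Fin s → ℕ)
    (hd2 : ∀ i, 2 ≤ d i) (hd3 : 3 ≤ d ⟨s - 1, by omega⟩)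
    (f : ℕ → ℤ)
    (hf : ∀ v : ℕ, f v = (∑ i, (Nat.choose (d i + v - 1) (v - 1) : ℤ))
      + ((r : ℤ) + 1 - (v : ℤ)) * (v : ℤ)) :
    ∀ u : ℕ, 1 ≤ u →
      f (u + 2) - 2 * f (u + 1) + f u
        = (∑ i, (Nat.choose (d i + u - 1) (u + 1) : ℤ)) - 2 ∧
      0 ≤ f (u + 2) - 2 * f (u + 1) + f u := by
  intro u hu
  exact (stmt11_general ⟨_, Finset.mem_univ _, hd3⟩ r hf hu).imp_right (Int.natCast_nonneg u).trans
end
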